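/- Let {U(S)} be the NTU LP game given by A, {b^i}, and {v^i} on a finite nonempty player set N, with each X({i}) nonempty and bounded. If v^i ≥ 0 (componentwise) for every i ∈ N, then the game is balanced (⋂_{S∈𝒮} U(S) ⊆ U(N) for every balanced collection 𝒮) and the core C(N) is nonempty. -/

import Mathlib

open Finset

/-- The design space `X(S)` of a coalition `S` in an NTU LP game. -/
def designSpace {K J N : Type*} [Fintype J] (A : K → J → ℝ) (b : N → K → ℝ)
    (S : Finset N) : Set (J → ℝ) :=
  {x | (∀ j, 0 ≤ x j) ∧ ∀ k, (∑ j, A k j * x j) ≤ ∑ i ∈ S, b i k}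

/-- The utility space `U(S)` of a coalition `S`. -/
def utilitySpace {K J N : Type*} [Fintype J] (A : K → J → ℝ) (b : N → K → ℝ)
    (v : N → J → ℝ) (S : Finset N) : Set (N → ℝ) :=
  {u | ∃ x ∈ designSpace A b S, ∀ i ∈ S, u i ≤ ∑ j, v i j * x j}

/-- The core `C(N) = U(N) \ ⋃_{∅ ≠ S ⊆ N} int U(S)` of an NTU LP game. -/
def core {K J N : Type*} [Fintype J] [Fintype N] (A : K → J → ℝ) (b : N → K → ℝ)
    (v : N → J → ℝ) : Set (N → ℝ) :=
  utilitySpace A b v Finset.univ \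
    ⋃ (S : Finset N) (_ : S.Nonempty), interior (utilitySpace A b v S)

/-!
Scarf's theorem that a balanced game has a nonempty core is proved by a parity argument. Exchanging
one column of a dominating set according to the preferences of the players, or one column of a
feasible basis according to the ratio test, leads to exactly one other such set, so that pairs of
neighbours are even in number. Double counting shows that the sets which are both dominating and
feasible are even in number too, if the set of all singletons, which is feasible, is declared
dominating; hence there is a genuine one. Its weights form a balanced family of coalitions, and
giving each player the worst of his payoffs in that family resists any finite number of objections.
Compactness of the individually rational feasible payoffs takes care of all objections at once.

The linear production game is balanced because the weighted sum of the designs of the coalitions is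
feasible for all players, and a player does not lose from designs of coalitions he is not part of.
Its feasible payoffs are closed and bounded above because the recession cone of a nonempty design
space does not depend on the coalition.
-/

/-- The two conditions are equivalent if `D ≠ B`, and exactly one of them holds if `D = B`. -/
theorem ite_subset_insert_add_ite_erase_subset {T : Type*} [DecidableEq T] {B D : Finset T}
    (h : #B = #D) (t : T) :
    (if t ∉ D ∧ B ⊆ insert t D then (1 : ZMod 2) else 0)
      + (if t ∈ B ∧ B.erase t ⊆ D then 1 else 0) = if D = B then 1 else 0 := by
  have hsub : B ⊆ D ↔ D = B :=
    ⟨fun hBD => (eq_of_subset_of_card_le hBD h.ge).symm, fun hDB => hDB.ge⟩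
  by_cases htD : t ∈ D <;> by_cases htB : t ∈ B
  · simp [htD, htB, ← hsub, ← subset_insert_iff, insert_eq_self.2 htD]
  · simp [htD, htB, ne_of_mem_of_not_mem' htD htB]
  · have htwo : (1 : ZMod 2) + 1 = 0 := CharTwo.add_self_eq_zero 1
    simp only [htD, htB, subset_insert_iff, (ne_of_mem_of_not_mem' htB htD).symm,
      not_false_eq_true, true_and, if_false]
    split_ifs <;> simp [htwo]
  · simp [htD, htB, subset_insert_iff, hsub]

theorem even_card_inter_of_even_walls {T : Type*} [DecidableEq T] [Nonempty T]
    {m : ℕ} {𝒟 ℬ : Finset (Finset T)} (hD : ∀ D ∈ 𝒟, #D = m) (hB : ∀ B ∈ ℬ, #B = m)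
    (hW : ∀ W : Finset T, #W + 1 = m → Even #{D ∈ 𝒟 | W ⊆ D})
    (hF : ∀ F : Finset T, #F = m + 1 → Even #{B ∈ ℬ | B ⊆ F}) :
    Even #(𝒟 ∩ ℬ) := by
  obtain ⟨t⟩ := ‹Nonempty T›
  have hins : ∑ D ∈ 𝒟, ∑ B ∈ ℬ, (if t ∉ D ∧ B ⊆ insert t D then (1 : ZMod 2) else 0) = 0 := by
    refine sum_eq_zero fun D hDm => ?_
    by_cases ht : t ∈ D
    · simp [ht]
    · simpa [ht, ZMod.natCast_eq_zero_iff_even] using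
        hF (insert t D) (by rw [card_insert_of_notMem ht, hD D hDm])
  have hera : ∑ D ∈ 𝒟, ∑ B ∈ ℬ, (if t ∈ B ∧ B.erase t ⊆ D then (1 : ZMod 2) else 0) = 0 := by
    rw [sum_comm]
    refine sum_eq_zero fun B hBm => ?_
    by_cases ht : t ∈ B
    · simpa [ht, ZMod.natCast_eq_zero_iff_even] using
        hW (B.erase t) (by rw [card_erase_add_one ht, hB B hBm])
    · simp [ht]
  refine ZMod.natCast_eq_zero_iff_even.1 ?_
  calc ((#(𝒟 ∩ ℬ) : ℕ) : ZMod 2) = ∑ D ∈ 𝒟, ∑ B ∈ ℬ, if D = B then (1 : ZMod 2) else 0 := by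
        simp
    _ = ∑ D ∈ 𝒟, ∑ B ∈ ℬ, ((if t ∉ D ∧ B ⊆ insert t D then (1 : ZMod 2) else 0)
          + if t ∈ B ∧ B.erase t ⊆ D then 1 else 0) :=
        sum_congr rfl fun D hDm => sum_congr rfl fun B hBm =>
          (ite_subset_insert_add_ite_erase_subset ((hB B hBm).trans (hD D hDm).symm) t).symm
    _ = 0 := by simp only [sum_add_distrib, hins, hera, add_zero]

theorem card_filter_image_erase_eq_two {N T : Type*} [Fintype N] [DecidableEq N] [DecidableEq T]
    {d : N → T} (hd : #(univ.image d) + 1 = Fintype.card N) :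
    #{x | (univ.erase x).image d = univ.image d} = 2 := by
  obtain ⟨p, -, q, -, hpq, hdpq⟩ := exists_ne_map_eq_of_card_image_lt
    (show #(univ.image d) < #univ by rw [card_univ]; omega)
  suffices ({x | (univ.erase x).image d = univ.image d} : Finset N) = {p, q} by
    rw [this, card_pair hpq]
  have image_erase_eq {x y : N} (hxy : x ≠ y) (hd : d x = d y) :
      (univ.erase x).image d = univ.image d := by
    refine (image_subset_image (erase_subset x univ)).antisymm fun t ht => ?_
    obtain ⟨r, -, rfl⟩ := mem_image.1 ht
    obtain rfl | hrx := eq_or_ne r x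
    · exact mem_image.2 ⟨y, by simp [hxy.symm], hd.symm⟩
    · exact mem_image_of_mem d (by simp [hrx])
  ext x
  simp only [mem_filter_univ, mem_insert, mem_singleton]
  refine ⟨fun hx => ?_, ?_⟩
  · by_contra! hne
    have hinj : Set.InjOn d (univ.erase x : Finset N) := by
      rw [← card_image_iff, hx, card_erase_of_mem (mem_univ x), card_univ]
      omega
    exact hpq (hinj (by simpa using hne.1.symm) (by simpa using hne.2.symm) hdpq)
  · rintro (rfl | rfl)
    · exact image_erase_eq hpq hdpq
    · exact image_erase_eq hpq.symm hdpq.symm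

section OrdinalPivoting

variable {N T α : Type*} [LinearOrder α] {c : N → T → α} {W : Finset T} {x y : N} {k : T}

/-- Domination in Scarf's sense: the row `i` of `c` ranks the columns according to the preferences
of `i`, and a set `D` of columns is dominating if no column is preferred to the worst column of `D`
in every row. -/
def IsDominating (c : N → T → α) (D : Finset T) : Prop :=
  ∀ t, ∃ i, ∀ j ∈ D, c i t ≤ c i j

/-- The column `t` is preferred to the worst column of `W` in every row other than `x`. -/
def IsAboveExcept (c : N → T → α) (W : Finset T) (x : N) (t : T) : Prop :=
  ∀ r, r ≠ x → ∃ j ∈ W, c r j < c r t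

/-- The column `k` may be added to `W` to form a dominating set in which `k` is the worst column in
row `x`: among the columns above `W` except in row `x`, it is the best one in row `x`. -/
def IsPivot (c : N → T → α) (W : Finset T) (x : N) (k : T) : Prop :=
  IsAboveExcept c W x k ∧ ∀ l, IsAboveExcept c W x l → c x l ≤ c x k

/-- Every column of `W` is the worst one of `W` in some row other than `x`, so that the row `x` can
be assigned to a new column. -/
def IsFreeRow (c : N → T → α) (W : Finset T) (x : N) : Prop :=
  ∀ w ∈ W, ∃ r ≠ x, ∀ j ∈ W, c r w ≤ c r j

theorem IsDominating.mono {D : Finset T} (hD : IsDominating c D) (hW : W ⊆ D) :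
    IsDominating c W :=
  fun t => (hD t).imp fun _ hi j hj => hi j (hW hj)

theorem IsDominating.le_of_isAboveExcept (hW : IsDominating c W) (hk : IsAboveExcept c W x k) :
    ∀ j ∈ W, c x k ≤ c x j := by
  obtain ⟨i, hi⟩ := hW k
  obtain rfl : i = x := by
    by_contra hix
    obtain ⟨j, hj, hlt⟩ := hk i hix
    exact (hi j hj).not_gt hlt
  exact hi

theorem IsDominating.eq_of_isAboveExcept (hW : IsDominating c W) (hx : IsAboveExcept c W x k)
    (hy : IsAboveExcept c W y k) : x = y := by
  by_contra hxy
  obtain ⟨j, hj, hlt⟩ := hy x hxy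
  exact (hW.le_of_isAboveExcept hx j hj).not_gt hlt

theorem IsFreeRow.notMem_of_isAboveExcept (hx : IsFreeRow c W x) (hk : IsAboveExcept c W x k) :
    k ∉ W := by
  intro hkW
  obtain ⟨r, hrx, hr⟩ := hx k hkW
  obtain ⟨j, hj, hlt⟩ := hk r hrx
  exact (hr j hj).not_gt hlt

theorem exists_isPivot [Finite T] (h : ∃ t, IsAboveExcept c W x t) : ∃ k, IsPivot c W x k :=
  Set.exists_max_image {t | IsAboveExcept c W x t} (c x) (Set.toFinite _) h

theorem IsDominating.insert_of_isPivot [DecidableEq T] (hW : IsDominating c W)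
    (hk : IsPivot c W x k) : IsDominating c (insert k W) := by
  intro t
  by_cases ht : IsAboveExcept c W x t
  · exact ⟨x, forall_mem_insert .. |>.2 ⟨hk.2 t ht, hW.le_of_isAboveExcept ht⟩⟩
  · simp only [IsAboveExcept, not_forall, not_exists, not_and, not_lt] at ht
    obtain ⟨r, hrx, hr⟩ := ht
    obtain ⟨j, hj, hlt⟩ := hk.1 r hrx
    exact ⟨r, forall_mem_insert .. |>.2 ⟨(hr j hj).trans hlt.le, hr⟩⟩

theorem exists_isFreeRow_isPivot_of_isDominating_insert [Fintype N] [DecidableEq T]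
    (hc : ∀ i, Function.Injective (c i)) (hkW : k ∉ W) (hcard : #W + 1 = Fintype.card N)
    (hD : IsDominating c (insert k W)) : ∃ x, IsFreeRow c W x ∧ IsPivot c W x k := by
  choose r hr using hD
  have hinj : Set.InjOn r (insert k W : Finset T) := fun s hs t ht hst =>
    hc (r s) ((hr s t ht).antisymm (hst ▸ hr t s hs))
  have hsurj : Set.SurjOn r (insert k W : Finset T) (univ : Finset N) :=
    surjOn_of_injOn_of_card_le r (by simp [Set.MapsTo]) hinj
      (by rw [card_univ, card_insert_of_notMem hkW, hcard])
  have hfree : IsFreeRow c W (r k) := fun w hw =>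
    ⟨r w, fun h => hkW (hinj (by simp [hw]) (by simp) h ▸ hw),
      fun j hj => hr w j (mem_insert_of_mem hj)⟩
  have habove : IsAboveExcept c W (r k) k := by
    intro i hi
    obtain ⟨w, hw, rfl⟩ := hsurj (mem_coe.2 (mem_univ i))
    have hwW : w ∈ W := mem_of_mem_insert_of_ne hw (by rintro rfl; exact hi rfl)
    exact ⟨w, hwW, (hr w k (mem_insert_self k W)).lt_of_ne
      fun h => hkW (hc _ h ▸ hwW)⟩
  refine ⟨r k, hfree, habove, fun l hl => ?_⟩
  obtain hlk | hlk := eq_or_ne (r l) (r k)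
  · exact hlk ▸ hr l k (mem_insert_self k W)
  · obtain ⟨j, hj, hlt⟩ := hl (r l) hlk
    exact absurd hlt (hr l j (mem_insert_of_mem hj)).not_gt

open scoped Classical in
theorem IsDominating.card_supersets_eq_card_isFreeRow [Fintype N] [Fintype T]
    [DecidableEq T] (hc : ∀ i, Function.Injective (c i)) (hcard : #W + 1 = Fintype.card N)
    (hW : IsDominating c W) :
    #{D | #D = Fintype.card N ∧ IsDominating c D ∧ W ⊆ D}
      = #{x | IsFreeRow c W x ∧ ∃ t, IsAboveExcept c W x t} := by
  have hpivot : ∀ x ∈ ({x | IsFreeRow c W x ∧ ∃ t, IsAboveExcept c W x t} : Finset N),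
      ∃ k, k ∉ W ∧ IsPivot c W x k := by
    intro x hx
    obtain ⟨hfree, habove⟩ := (mem_filter_univ x).1 hx
    obtain ⟨k, hk⟩ := exists_isPivot habove
    exact ⟨k, hfree.notMem_of_isAboveExcept hk.1, hk⟩
  choose k hkW hk using hpivot
  refine (card_bij (fun x hx => insert (k x hx) W) (fun x hx => ?_) (fun x hx y hy hxy => ?_)
    (fun D hD => ?_)).symm
  · rw [mem_filter_univ]
    exact ⟨(card_insert_of_notMem (hkW x hx)).trans hcard, hW.insert_of_isPivot (hk x hx),
      subset_insert _ _⟩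
  · have hkxy : k x hx = k y hy := (insert_inj (hkW x hx)).1 hxy
    exact hW.eq_of_isAboveExcept (hk x hx).1 (hkxy ▸ (hk y hy).1)
  · obtain ⟨hDcard, hDdom, hWD⟩ := (mem_filter_univ D).1 hD
    obtain ⟨l, hlW, rfl⟩ := exists_eq_insert_iff.2 ⟨hWD, hcard.trans hDcard.symm⟩
    obtain ⟨x, hfree, hpiv⟩ :=
      exists_isFreeRow_isPivot_of_isDominating_insert hc hlW hcard hDdom
    have hx : x ∈ ({x | IsFreeRow c W x ∧ ∃ t, IsAboveExcept c W x t} : Finset N) :=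
      (mem_filter_univ x).2 ⟨hfree, l, hpiv.1⟩
    have hkl : k x hx = l := hc x ((hpiv.2 _ (hk x hx).1).antisymm ((hk x hx).2 l hpiv.1))
    exact ⟨x, hx, by rw [hkl]⟩

open scoped Classical in
theorem IsDominating.card_isFreeRow_eq_two [Fintype N]
    (hc : ∀ i, Function.Injective (c i)) (hcard : #W + 1 = Fintype.card N) (hne : W.Nonempty)
    (hW : IsDominating c W) : #{x | IsFreeRow c W x} = 2 := by
  choose worst hworst_mem hworst using fun i => exists_min_image W (c i) hne
  have hworst_eq {i : N} {w : T} (hw : w ∈ W) (h : ∀ j ∈ W, c i w ≤ c i j) : worst i = w :=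
    hc i ((hworst i w hw).antisymm (h _ (hworst_mem i)))
  have himage : univ.image worst = W := by
    refine (image_subset_iff.2 fun i _ => hworst_mem i).antisymm fun w hw => ?_
    obtain ⟨i, hi⟩ := hW w
    exact mem_image.2 ⟨i, mem_univ i, hworst_eq hw hi⟩
  have hfree (x : N) : IsFreeRow c W x ↔ (univ.erase x).image worst = univ.image worst := by
    rw [himage]
    refine ⟨fun h => (image_subset_iff.2 fun i _ => hworst_mem i).antisymm fun w hw => ?_,
      fun h w hw => ?_⟩
    · obtain ⟨r, hrx, hr⟩ := h w hw
      exact mem_image.2 ⟨r, by simp [hrx], hworst_eq hw hr⟩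
    · obtain ⟨r, hr, rfl⟩ := mem_image.1 (h.symm ▸ hw)
      exact ⟨r, ne_of_mem_erase hr, hworst r⟩
  simp only [hfree]
  exact card_filter_image_erase_eq_two (by rw [himage, hcard])

end OrdinalPivoting

/-- The ordinal data of Scarf's lemma: row `i` ranks its own unit column `inl i` last and every
other unit column above all the columns `inr e`. -/
structure IsScarfOrder {N E α : Type*} [LinearOrder α] (c : N → N ⊕ E → α) : Prop where
  inl_lt : ∀ i t, t ≠ Sum.inl i → c i (Sum.inl i) < c i t
  inr_lt_inl : ∀ i j e, j ≠ i → c i (Sum.inr e) < c i (Sum.inl j)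

namespace IsScarfOrder

variable {N E α : Type*} [LinearOrder α] {c : N → N ⊕ E → α} {W : Finset (N ⊕ E)} {r : N}

theorem inl_le (hc : IsScarfOrder c) (i : N) (t : N ⊕ E) : c i (Sum.inl i) ≤ c i t := by
  obtain rfl | ht := eq_or_ne t (Sum.inl i)
  · exact le_rfl
  · exact (hc.inl_lt i t ht).le

theorem isAboveExcept_inl (hc : IsScarfOrder c) {e : E} (he : Sum.inr e ∈ W) (x : N) :
    IsAboveExcept c W x (Sum.inl x) :=
  fun r hr => ⟨Sum.inr e, he, hc.inr_lt_inl r x e hr.symm⟩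

variable [Fintype N] [DecidableEq N] [DecidableEq E]

theorem not_isDominating_image_inl [Nonempty E] (hc : IsScarfOrder c) :
    ¬ IsDominating c (univ.image (Sum.inl : N → N ⊕ E)) := by
  intro h
  obtain ⟨e⟩ := ‹Nonempty E›
  obtain ⟨i, hi⟩ := h (Sum.inr e)
  exact (hi (Sum.inl i) (by simp)).not_gt (hc.inl_lt i _ Sum.inr_ne_inl)

theorem isDominating_image_inl_erase (hc : IsScarfOrder c) (r : N) :
    IsDominating c ((univ.erase r).image (Sum.inl : N → N ⊕ E)) := by
  rintro (j | e)
  · exact ⟨j, fun t _ => hc.inl_le j t⟩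
  · refine ⟨r, forall_mem_image.2 fun j hj => (hc.inr_lt_inl r j e (ne_of_mem_erase hj)).le⟩

theorem isFreeRow_and_exists_isAboveExcept_iff [Nonempty E] (hc : IsScarfOrder c) {x : N} :
    (IsFreeRow c ((univ.erase r).image (Sum.inl : N → N ⊕ E)) x ∧
      ∃ t, IsAboveExcept c ((univ.erase r).image (Sum.inl : N → N ⊕ E)) x t) ↔ x = r := by
  constructor
  · rintro ⟨hfree, t, ht⟩
    by_contra hxr
    obtain ⟨j, hj, hlt⟩ := ht r (Ne.symm hxr)
    obtain ⟨s, hs, rfl⟩ := mem_image.1 hj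
    have hsr : s ≠ r := ne_of_mem_erase hs
    obtain l | e := t
    · obtain rfl : l = x := by
        by_contra hlx
        obtain ⟨j, -, hj⟩ := ht l hlx
        exact (hc.inl_le l j).not_gt hj
      exact hfree.notMem_of_isAboveExcept ht (by simp [hxr])
    · exact hlt.not_gt (hc.inr_lt_inl r s e hsr)
  · rintro rfl
    refine ⟨forall_mem_image.2 fun j hj => ⟨j, ne_of_mem_erase hj, fun t _ => hc.inl_le j t⟩, ?_⟩
    obtain ⟨e⟩ := ‹Nonempty E›
    exact ⟨Sum.inr e, fun s hs => ⟨Sum.inl s, by simp [hs], hc.inl_lt s _ Sum.inr_ne_inl⟩⟩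

open scoped Classical in
theorem card_supersets_image_inl_erase [Fintype E] [Nonempty E] (hc : IsScarfOrder c)
    (hinj : ∀ i, Function.Injective (c i)) (r : N) :
    #{D | #D = Fintype.card N ∧ IsDominating c D ∧ (univ.erase r).image Sum.inl ⊆ D} = 1 := by
  have hcard : #((univ.erase r).image (Sum.inl : N → N ⊕ E)) + 1 = Fintype.card N := by
    rw [card_image_of_injective _ Sum.inl_injective, card_erase_add_one (mem_univ r), card_univ]
  rw [(hc.isDominating_image_inl_erase r).card_supersets_eq_card_isFreeRow hinj hcard,
    card_eq_one]
  refine ⟨r, ?_⟩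
  ext x
  rw [mem_filter_univ, hc.isFreeRow_and_exists_isAboveExcept_iff, mem_singleton]

open scoped Classical in
theorem even_card_supersets_of_inr_mem [Fintype E] (hc : IsScarfOrder c)
    (hinj : ∀ i, Function.Injective (c i)) (hcard : #W + 1 = Fintype.card N) {e : E}
    (he : Sum.inr e ∈ W) :
    Even #{D | #D = Fintype.card N ∧ IsDominating c D ∧ W ⊆ D} := by
  by_cases hW : IsDominating c W
  · have habove (x : N) : ∃ t, IsAboveExcept c W x t := ⟨_, hc.isAboveExcept_inl he x⟩
    rw [hW.card_supersets_eq_card_isFreeRow hinj hcard]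
    simp only [habove, and_true]
    rw [hW.card_isFreeRow_eq_two hinj hcard ⟨_, he⟩]
    exact even_two
  · rw [filter_eq_empty_iff.2 fun D _ hD => hW (hD.2.1.mono hD.2.2)]
    simp

open scoped Classical in
theorem even_card_supersets [Fintype E] [Nonempty E] (hc : IsScarfOrder c)
    (hinj : ∀ i, Function.Injective (c i)) (hcard : #W + 1 = Fintype.card N) :
    Even #{D ∈ insert (univ.image Sum.inl)
      ({D | #D = Fintype.card N ∧ IsDominating c D} : Finset (Finset (N ⊕ E))) | W ⊆ D} := by
  by_cases hW : ∃ e, Sum.inr e ∈ W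
  · obtain ⟨e, he⟩ := hW
    have hWS : ¬ W ⊆ univ.image Sum.inl := fun h => by simpa using h he
    rw [filter_insert, if_neg hWS, filter_filter]
    simpa only [and_assoc] using hc.even_card_supersets_of_inr_mem hinj hcard he
  · have hWS : W ⊆ univ.image Sum.inl := by
      rintro (j | e) ht
      · simp
      · exact absurd ⟨e, ht⟩ hW
    obtain ⟨r, rfl⟩ : ∃ r, W = (univ.erase r).image Sum.inl := by
      obtain ⟨t, ht, hins⟩ := exists_eq_insert_iff.2 ⟨hWS, by
        rw [hcard, card_image_of_injective _ Sum.inl_injective, card_univ]⟩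
      obtain ⟨r, -, rfl⟩ := mem_image.1 (hins ▸ mem_insert_self t W)
      exact ⟨r, by rw [image_erase Sum.inl_injective, ← hins, erase_insert ht]⟩
    rw [filter_insert, if_pos hWS, card_insert_of_notMem
      (by simp [hc.not_isDominating_image_inl]), filter_filter]
    simp only [and_assoc, hc.card_supersets_image_inl_erase hinj r]
    decide

end IsScarfOrder

theorem isBounded_iff_forall_ray_eq_zero {V : Type*} [NormedAddCommGroup V] [NormedSpace ℝ V]
    [FiniteDimensional ℝ V] {s : Set V} (hconv : Convex ℝ s) (hclosed : IsClosed s) {p : V}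
    (hp : p ∈ s) :
    Bornology.IsBounded s ↔ ∀ v, (∀ r : ℝ, 0 ≤ r → r • v + p ∈ s) → v = 0 := by
  refine ⟨fun hbdd v hv => ?_, fun hray => ?_⟩
  · refine asymptoticCone_subset_singleton_of_bounded hbdd (mem_asymptoticCone_iff.2 ?_)
    have hlim := Filter.Tendsto.asymptoticNhds_vadd_const p
      (Filter.tendsto_id.atTop_smul_const_tendsto_asymptoticNhds (k := ℝ) v)
    exact hlim.frequently
      ((Filter.eventually_ge_atTop (0 : ℝ)).mono fun r hr => hv r hr).frequently
  · exact isBounded_iff_asymptoticCone_subset_singleton.2 fun v hv => hray v fun r hr =>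
      hconv.smul_vadd_mem_of_isClosed_of_mem_asymptoticCone hclosed hr hv hp

theorem nonneg_iff_forall_nonneg_mul_add {x y : ℝ} (hy : 0 ≤ y) :
    0 ≤ x ↔ ∀ r : ℝ, 0 ≤ r → 0 ≤ r * x + y := by
  refine ⟨fun hx r hr => by positivity, fun h => ?_⟩
  by_contra! hx
  have hr := h ((y + 1) / -x) (by apply div_nonneg <;> linarith)
  rw [div_mul_eq_mul_div, div_neg, mul_div_cancel_right₀ _ hx.ne] at hr
  linarith

section CardinalPivoting

variable {T M : Type*} [AddCommGroup M] [Module ℝ M] {L : (T → ℝ) →ₗ[ℝ] M} {b : M}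
  {B F G : Finset T} {s t : T} {x y z : T → ℝ}

/-- The set `B` of columns of `L` is feasible for `b` if `b` lies in the cone they span. -/
def ConeFeasible (L : (T → ℝ) →ₗ[ℝ] M) (b : M) (B : Finset T) : Prop :=
  ∃ x, 0 ≤ x ∧ (∀ t ∉ B, x t = 0) ∧ L x = b

/-- The right-hand side `b` is nondegenerate in the sense of linear programming: no representation
of `b` by columns of `L` uses fewer columns than the dimension of the space. -/
def IsGeneric (L : (T → ℝ) →ₗ[ℝ] M) (b : M) : Prop :=
  ∀ (W : Finset T) (x : T → ℝ), (∀ t ∉ W, x t = 0) → L x = b → Module.finrank ℝ M ≤ #W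

namespace IsGeneric

theorem ne_zero (hb : IsGeneric L b) (hG : #G ≤ Module.finrank ℝ M) (hx : ∀ t ∉ G, x t = 0)
    (hLx : L x = b) (ht : t ∈ G) : x t ≠ 0 := by
  classical
  intro hxt
  have hsupp : ∀ r ∉ G.erase t, x r = 0 := fun r hr => by
    obtain rfl | hrt := eq_or_ne r t
    · exact hxt
    · exact hx r fun hrG => hr (mem_erase.2 ⟨hrt, hrG⟩)
  exact (card_erase_lt_of_mem ht).not_ge (hG.trans (hb _ x hsupp hLx))

theorem pos (hb : IsGeneric L b) (hG : #G ≤ Module.finrank ℝ M) (hx₀ : 0 ≤ x)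
    (hx : ∀ t ∉ G, x t = 0) (hLx : L x = b) (ht : t ∈ G) : 0 < x t :=
  (hx₀ t).lt_of_ne' (hb.ne_zero hG hx hLx ht)

theorem eq_of_support_subset (hb : IsGeneric L b) (hG : #G ≤ Module.finrank ℝ M)
    (hx : ∀ t ∉ G, x t = 0) (hy : ∀ t ∉ G, y t = 0) (hLx : L x = b) (hLy : L y = b) : x = y := by
  ext t
  by_contra hxy
  have ht : t ∈ G := by
    by_contra htG
    exact hxy ((hx t htG).trans (hy t htG).symm)
  -- the point of the line through `x` and `y` whose coordinate `t` vanishes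
  refine hb.ne_zero hG (x := x + (x t / (y t - x t)) • (x - y)) (fun r hr => ?_) ?_ ht ?_
  · simp [hx r hr, hy r hr]
  · simp [hLx, hLy]
  · have : y t - x t ≠ 0 := sub_ne_zero.2 (Ne.symm hxy)
    simp only [Pi.add_apply, Pi.smul_apply, Pi.sub_apply, smul_eq_mul]
    field_simp
    ring

/-- The three solutions would be collinear, but moving from the first to the second past the zero
of one coordinate makes another coordinate negative before the third can vanish. -/
theorem not_three_coneFeasible_erase [DecidableEq T] (hb : IsGeneric L b)
    (hF : #F = Module.finrank ℝ M + 1) {s₁ s₂ s₃ : T} (h₁ : s₁ ∈ F) (h₂ : s₂ ∈ F) (h₃ : s₃ ∈ F)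
    (h₁₂ : s₁ ≠ s₂) (h₁₃ : s₁ ≠ s₃) (h₂₃ : s₂ ≠ s₃) (hf₁ : ConeFeasible L b (F.erase s₁))
    (hf₂ : ConeFeasible L b (F.erase s₂)) : ¬ ConeFeasible L b (F.erase s₃) := by
  rintro ⟨y, hy₀, hy, hLy⟩
  obtain ⟨x₁, hx₁₀, hx₁, hLx₁⟩ := hf₁
  obtain ⟨x₂, hx₂₀, hx₂, hLx₂⟩ := hf₂
  have hcard {s : T} (hs : s ∈ F) : #(F.erase s) ≤ Module.finrank ℝ M := by
    rw [card_erase_of_mem hs, hF, Nat.add_sub_cancel]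
  have hx₁pos {t : T} (ht : t ∈ F) (hts : t ≠ s₁) : 0 < x₁ t :=
    hb.pos (hcard h₁) hx₁₀ hx₁ hLx₁ (mem_erase.2 ⟨hts, ht⟩)
  have hx₂pos {t : T} (ht : t ∈ F) (hts : t ≠ s₂) : 0 < x₂ t :=
    hb.pos (hcard h₂) hx₂₀ hx₂ hLx₂ (mem_erase.2 ⟨hts, ht⟩)
  have hypos {t : T} (ht : t ∈ F) (hts : t ≠ s₃) : 0 < y t :=
    hb.pos (hcard h₃) hy₀ hy hLy (mem_erase.2 ⟨hts, ht⟩)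
  set η := y s₁ / x₂ s₁
  have hη : 0 < η := div_pos (hypos h₁ h₁₃) (hx₂pos h₁ h₁₂)
  have hline : y - η • (x₂ - x₁) = x₁ := by
    refine hb.eq_of_support_subset (hcard h₁) (fun t ht => ?_) hx₁ ?_ hLx₁
    · obtain rfl | hts := eq_or_ne t s₁
      · simp [hx₁ t ht, η, (hx₂pos h₁ h₁₂).ne']
      · have htF : t ∉ F := fun h => ht (mem_erase.2 ⟨hts, h⟩)
        simp [hx₁ t ht, hx₂ t fun h => htF (mem_of_mem_erase h),
          hy t fun h => htF (mem_of_mem_erase h)]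
    · simp [hLx₁, hLx₂, hLy]
  have hline_apply (t : T) : y t = (1 - η) * x₁ t + η * x₂ t := by
    have := congrFun hline t
    simp only [Pi.sub_apply, Pi.smul_apply, smul_eq_mul] at this
    linarith
  have hη₁ : 0 < 1 - η := by
    have hpos := hypos h₂ h₂₃
    rw [hline_apply, hx₂ s₂ (notMem_erase s₂ F), mul_zero, add_zero] at hpos
    exact pos_of_mul_pos_left hpos (hx₁₀ s₂)
  have hzero := hline_apply s₃
  rw [hy s₃ (notMem_erase s₃ F)] at hzero
  exact hzero.not_lt (add_pos (mul_pos hη₁ (hx₁pos h₃ h₁₃.symm)) (mul_pos hη (hx₂pos h₃ h₂₃.symm)))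

end IsGeneric

theorem exists_ne_zero_support_subset_of_finrank_lt_card [Module.Finite ℝ M]
    (L : (T → ℝ) →ₗ[ℝ] M) (hF : Module.finrank ℝ M < #F) :
    ∃ z, z ≠ 0 ∧ (∀ t ∉ F, z t = 0) ∧ L z = 0 := by
  have hker : (L ∘ₗ Function.ExtendByZero.linearMap ℝ ((↑) : F → T)).ker ≠ ⊥ :=
    LinearMap.ker_ne_bot_of_finrank_lt (by simpa using hF)
  obtain ⟨g, hg, hg₀⟩ := (Submodule.ne_bot_iff _).1 hker
  refine ⟨Function.ExtendByZero.linearMap ℝ ((↑) : F → T) g, fun h => hg₀ ?_, fun t ht => ?_, hg⟩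
  · ext t
    simpa [Subtype.val_injective.extend_apply] using congrFun h t
  · simp [Function.extend_apply', ht]

theorem IsGeneric.exists_ker_pos [Module.Finite ℝ M] [DecidableEq T] (hb : IsGeneric L b)
    (hF : #F = Module.finrank ℝ M + 1) (hs : s ∈ F) (hfeas : ConeFeasible L b (F.erase s)) :
    ∃ z, (∀ t ∉ F, z t = 0) ∧ L z = 0 ∧ 0 < z s := by
  obtain ⟨z, hz, hzF, hLz⟩ :=
    exists_ne_zero_support_subset_of_finrank_lt_card L (by omega : Module.finrank ℝ M < #F)
  obtain ⟨x, -, hx, hLx⟩ := hfeas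
  have hzs : z s ≠ 0 := by
    intro hzs
    have hzsupp : ∀ t ∉ F.erase s, z t = 0 := fun t ht => by
      obtain rfl | hts := eq_or_ne t s
      · exact hzs
      · exact hzF t fun htF => ht (mem_erase.2 ⟨hts, htF⟩)
    have hxz : x = x + z := hb.eq_of_support_subset (G := F.erase s)
      (by rw [card_erase_of_mem hs, hF, Nat.add_sub_cancel]) hx
      (fun t ht => by simp [hx t ht, hzsupp t ht]) hLx (by simp [hLx, hLz])
    exact hz (left_eq_add.1 hxz)
  obtain hneg | hpos := hzs.lt_or_gt
  · exact ⟨-z, fun t ht => by simp [hzF t ht], by simp [hLz], neg_pos.2 hneg⟩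
  · exact ⟨z, hzF, hLz, hpos⟩

variable [Finite T]

theorem exists_ratio_test (hx : 0 ≤ x) (hz : ∃ t, z t < 0) :
    ∃ (θ : ℝ) (s : T), z s < 0 ∧ 0 ≤ x + θ • z ∧ (x + θ • z) s = 0 := by
  obtain ⟨s, hs, hmin⟩ := Set.exists_min_image {t | z t < 0} (fun t => x t / -z t)
    (Set.toFinite _) hz
  have hs_pos : 0 < -z s := neg_pos.2 hs
  refine ⟨x s / -z s, s, hs, fun t => ?_, ?_⟩
  · have hθ : 0 ≤ x s / -z s := div_nonneg (hx s) hs_pos.le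
    rw [Pi.zero_apply, Pi.add_apply, Pi.smul_apply, smul_eq_mul]
    obtain ht | ht := le_or_gt 0 (z t)
    · exact add_nonneg (hx t) (mul_nonneg hθ ht)
    · have hle := (le_div_iff₀ (neg_pos.2 ht)).1 (hmin t ht)
      linarith
  · rw [Pi.add_apply, Pi.smul_apply, smul_eq_mul, div_mul_eq_mul_div, div_neg,
      mul_div_cancel_right₀ _ (neg_pos.1 hs_pos).ne, add_neg_cancel]

variable [Module.Finite ℝ M] [DecidableEq T]

theorem IsGeneric.exists_ne_coneFeasible_erase (hL : ∀ z, 0 ≤ z → L z = 0 → z = 0)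
    (hb : IsGeneric L b) (hF : #F = Module.finrank ℝ M + 1) (hs : s ∈ F)
    (hfeas : ConeFeasible L b (F.erase s)) : ∃ s' ∈ F, s' ≠ s ∧ ConeFeasible L b (F.erase s') := by
  obtain ⟨z, hzF, hLz, hzs⟩ := hb.exists_ker_pos hF hs hfeas
  obtain ⟨x, hx₀, hx, hLx⟩ := hfeas
  have hneg : ∃ t, z t < 0 := by
    by_contra! hz
    exact hzs.ne' (congrFun (hL z hz hLz) s)
  obtain ⟨θ, s', hs', hnonneg, hzero⟩ := exists_ratio_test hx₀ hneg
  have hs'F : s' ∈ F := by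
    by_contra h
    exact hs'.ne (hzF s' h)
  refine ⟨s', hs'F, ?_, x + θ • z, hnonneg, fun t ht => ?_, by simp [hLx, hLz]⟩
  · rintro rfl
    exact lt_asymm hs' hzs
  · obtain rfl | hts := eq_or_ne t s'
    · exact hzero
    · have htF : t ∉ F := fun h => ht (mem_erase.2 ⟨hts, h⟩)
      simp [hx t fun h => htF (mem_of_mem_erase h), hzF t htF]

open scoped Classical in
theorem IsGeneric.even_card_coneFeasible_erase (hL : ∀ z, 0 ≤ z → L z = 0 → z = 0)
    (hb : IsGeneric L b) (hF : #F = Module.finrank ℝ M + 1) :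
    Even #{s ∈ F | ConeFeasible L b (F.erase s)} := by
  obtain hempty | ⟨s, hs⟩ :=
    ({s ∈ F | ConeFeasible L b (F.erase s)} : Finset T).eq_empty_or_nonempty
  · simp [hempty]
  have hle : #{s ∈ F | ConeFeasible L b (F.erase s)} ≤ 2 := by
    by_contra! h
    obtain ⟨s₁, h₁, s₂, h₂, s₃, h₃, h₁₂, h₁₃, h₂₃⟩ := two_lt_card.1 h
    rw [mem_filter] at h₁ h₂ h₃
    exact hb.not_three_coneFeasible_erase hF h₁.1 h₂.1 h₃.1 h₁₂ h₁₃ h₂₃ h₁.2 h₂.2 h₃.2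
  have hlt : 1 < #{s ∈ F | ConeFeasible L b (F.erase s)} := by
    have hsF := mem_filter.1 hs
    obtain ⟨s', hs'F, hne, hs'⟩ := hb.exists_ne_coneFeasible_erase hL hF hsF.1 hsF.2
    exact one_lt_card.2 ⟨s', mem_filter.2 ⟨hs'F, hs'⟩, s, hs, hne⟩
  rw [hle.antisymm hlt]
  exact even_two

open scoped Classical in
theorem IsGeneric.even_card_coneFeasible_subsets [Fintype T] (hL : ∀ z, 0 ≤ z → L z = 0 → z = 0)
    (hb : IsGeneric L b) (hF : #F = Module.finrank ℝ M + 1) :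
    Even #{B : Finset T | #B = Module.finrank ℝ M ∧ ConeFeasible L b B ∧ B ⊆ F} := by
  have himage : ({B | #B = Module.finrank ℝ M ∧ ConeFeasible L b B ∧ B ⊆ F} : Finset (Finset T))
      = ({s ∈ F | ConeFeasible L b (F.erase s)} : Finset T).image F.erase := by
    ext B
    simp only [mem_image, mem_filter, mem_univ, true_and]
    constructor
    · rintro ⟨hcard, hfeas, hBF⟩
      obtain ⟨s, hsB, rfl⟩ := exists_eq_insert_iff.2 ⟨hBF, by rw [hcard, hF]⟩
      have herase : (insert s B).erase s = B := erase_insert hsB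
      exact ⟨s, ⟨mem_insert_self s B, by rwa [herase]⟩, herase⟩
    · rintro ⟨s, ⟨hs, hfeas⟩, rfl⟩
      exact ⟨by rw [card_erase_of_mem hs, hF, Nat.add_sub_cancel], hfeas, erase_subset s F⟩
  rw [himage, card_image_of_injOn ((erase_injOn F).mono (coe_subset.2 (filter_subset _ _)))]
  exact hb.even_card_coneFeasible_erase hL hF

end CardinalPivoting

section GenericPerturbation

variable {T M : Type*} [Finite T] [NormedAddCommGroup M] [NormedSpace ℝ M]
  [FiniteDimensional ℝ M]

theorem dense_setOf_isGeneric (L : (T → ℝ) →ₗ[ℝ] M) : Dense {b | IsGeneric L b} := by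
  classical
  let L' (W : Finset T) : (W → ℝ) →ₗ[ℝ] M := L ∘ₗ Function.ExtendByZero.linearMap ℝ ((↑) : W → T)
  have hdense : Dense (⋂ W : {W : Finset T // #W < Module.finrank ℝ M},
      (Set.range (L' W))ᶜ) := by
    refine dense_iInter_of_isOpen (fun W => ?_) fun W => ?_
    · exact (Submodule.closed_of_finiteDimensional (L' W).range).isOpen_compl
    · have hsmooth : ContDiff ℝ 1 (L' W) := (LinearMap.toContinuousLinearMap (L' W)).contDiff
      exact hsmooth.dense_compl_range_of_finrank_lt_finrank (by simpa using W.2)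
  refine hdense.mono fun b hb W x hx hLx => ?_
  by_contra! hW
  refine Set.mem_iInter.1 hb ⟨W, hW⟩ ⟨fun t => x t, ?_⟩
  have hext : Function.ExtendByZero.linearMap ℝ ((↑) : W → T) (fun t => x t) = x := by
    ext t
    by_cases ht : t ∈ W
    · exact Subtype.val_injective.extend_apply (fun t : W => x t) 0 ⟨t, ht⟩
    · simp [Function.extend_apply', ht, hx t ht]
  simp [L', hext, hLx]

theorem isBounded_nonneg_inter_preimage {L : (T → ℝ) →ₗ[ℝ] M}
    (hL : ∀ z, 0 ≤ z → L z = 0 → z = 0) {s : Set M} (hs : Bornology.IsBounded s) :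
    Bornology.IsBounded (Set.Ici 0 ∩ L ⁻¹' s) := by
  cases nonempty_fintype T
  obtain ⟨R, hR, hsR⟩ := hs.subset_closedBall_lt 0 0
  refine Bornology.IsBounded.subset ?_ (Set.inter_subset_inter_right _ (Set.preimage_mono hsR))
  have hball : (0 : M) ∈ Metric.closedBall 0 R := Metric.mem_closedBall_self hR.le
  refine (isBounded_iff_forall_ray_eq_zero (p := 0)
    ((convex_Ici 0).inter ((convex_closedBall 0 R).linear_preimage L))
    (isClosed_Ici.inter (Metric.isClosed_closedBall.preimage L.continuous_of_finiteDimensional))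
    ⟨Set.self_mem_Ici, by simpa using hR.le⟩).2 fun z hz => hL z ?_ ?_
  · simpa using (hz 1 zero_le_one).1
  · refine (isBounded_iff_forall_ray_eq_zero (convex_closedBall 0 R) Metric.isClosed_closedBall
      hball).1 Metric.isBounded_closedBall _ fun r hr => ?_
    simpa using (hz r hr).2

theorem isClosed_setOf_coneFeasible {L : (T → ℝ) →ₗ[ℝ] M} (hL : ∀ z, 0 ≤ z → L z = 0 → z = 0)
    (B : Finset T) : IsClosed {b | ConeFeasible L b B} := by
  cases nonempty_fintype T
  have hcont : Continuous L := L.continuous_of_finiteDimensional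
  refine isClosed_of_closure_subset fun b hb => ?_
  set P : Set (T → ℝ) := Set.Ici 0 ∩ L ⁻¹' Metric.closedBall b 1 ∩ Set.pi (↑B)ᶜ fun _ => {0}
  have hP : IsCompact P :=
    (Metric.isCompact_of_isClosed_isBounded
      (isClosed_Ici.inter (Metric.isClosed_closedBall.preimage hcont))
      (isBounded_nonneg_inter_preimage hL Metric.isBounded_closedBall)).inter_right
      (isClosed_set_pi fun _ _ => isClosed_singleton)
  have hsub : Metric.ball b 1 ∩ {b | ConeFeasible L b B} ⊆ L '' P := by
    rintro _ ⟨hball, x, hx₀, hx, rfl⟩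
    exact ⟨x, ⟨⟨hx₀, Metric.ball_subset_closedBall hball⟩, hx⟩, rfl⟩
  obtain ⟨x, ⟨⟨hx₀, -⟩, hx⟩, hLx⟩ := closure_minimal hsub (hP.image hcont).isClosed
    (Metric.isOpen_ball.inter_closure ⟨Metric.mem_ball_self one_pos, hb⟩)
  exact ⟨x, hx₀, hx, hLx⟩

end GenericPerturbation

theorem exists_isGeneric_coneFeasible_imp {T M : Type*} [Finite T] [NormedAddCommGroup M]
    [NormedSpace ℝ M] [FiniteDimensional ℝ M] {L : (T → ℝ) →ₗ[ℝ] M}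
    (hL : ∀ z, 0 ≤ z → L z = 0 → z = 0) {b : M} {s : Set M} (hs : s ∈ nhds b) :
    ∃ b' ∈ s, IsGeneric L b' ∧ ∀ B, ConeFeasible L b' B → ConeFeasible L b B := by
  have hU : (⋂ B : {B : Finset T // ¬ ConeFeasible L b B}, {b | ConeFeasible L b B}ᶜ) ∈ nhds b :=
    Filter.iInter_mem.2 fun B => (isClosed_setOf_coneFeasible hL B).isOpen_compl.mem_nhds B.2
  obtain ⟨b', hb', hb's, hb'U⟩ :=
    (dense_setOf_isGeneric L).inter_nhds_nonempty (Filter.inter_mem hs hU)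
  refine ⟨b', hb's, hb', fun B hB => ?_⟩
  by_contra h
  exact Set.mem_iInter.1 hb'U ⟨B, h⟩ hB

section ScarfLemma

variable {N E α : Type*} [LinearOrder α] {c : N → N ⊕ E → α}
  {L : (N ⊕ E → ℝ) →ₗ[ℝ] N → ℝ} {b : N → ℝ}

theorem coneFeasible_image_inl [Fintype N] [DecidableEq (N ⊕ E)]
    (hunit : ∀ y, L (Sum.elim y 0) = y) (hb : 0 ≤ b) : ConeFeasible L b (univ.image Sum.inl) := by
  refine ⟨Sum.elim b 0, ?_, ?_, hunit b⟩
  · rintro (i | e)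
    · exact hb i
    · exact le_rfl
  · rintro (i | e) h
    · simp at h
    · rfl

variable [Finite N] [Finite E]

theorem IsScarfOrder.exists_isDominating_coneFeasible_of_isGeneric [Nonempty E]
    (hc : IsScarfOrder c) (hinj : ∀ i, Function.Injective (c i))
    (hL : ∀ z, 0 ≤ z → L z = 0 → z = 0) (hunit : ∀ y, L (Sum.elim y 0) = y) (hb₀ : 0 ≤ b)
    (hb : IsGeneric L b) : ∃ B, IsDominating c B ∧ ConeFeasible L b B := by
  classical
  cases nonempty_fintype N
  cases nonempty_fintype E
  let S : Finset (N ⊕ E) := univ.image Sum.inl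
  let 𝒟 : Finset (Finset (N ⊕ E)) := insert S
    ({D | #D = Fintype.card N ∧ IsDominating c D} : Finset (Finset (N ⊕ E)))
  let ℬ : Finset (Finset (N ⊕ E)) := {B | #B = Fintype.card N ∧ ConeFeasible L b B}
  have hS : #S = Fintype.card N := by
    rw [card_image_of_injective _ Sum.inl_injective, card_univ]
  have hdim : Module.finrank ℝ (N → ℝ) = Fintype.card N := Module.finrank_fintype_fun_eq_card ℝ
  have heven : Even #(𝒟 ∩ ℬ) := by
    refine even_card_inter_of_even_walls (m := Fintype.card N)
      ((forall_mem_insert ..).2 ⟨hS, fun D hD => ((mem_filter_univ D).1 hD).1⟩)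
      (fun B hB => ((mem_filter_univ B).1 hB).1) (fun W hW => ?_) fun F hF => ?_
    · exact hc.even_card_supersets hinj hW
    · have := hb.even_card_coneFeasible_subsets hL (hF.trans (by rw [hdim]))
      simpa only [ℬ, filter_filter, and_assoc, hdim] using this
  have hSmem : S ∈ 𝒟 ∩ ℬ := mem_inter.2
    ⟨mem_insert_self S _, (mem_filter_univ S).2 ⟨hS, coneFeasible_image_inl hunit hb₀⟩⟩
  obtain ⟨B, hB, hBS⟩ : ∃ B ∈ 𝒟 ∩ ℬ, B ≠ S := by
    refine exists_mem_ne ?_ S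
    have hpos : 0 < #(𝒟 ∩ ℬ) := card_pos.2 ⟨S, hSmem⟩
    obtain ⟨r, hr⟩ := heven
    omega
  obtain ⟨hBD, hBB⟩ := mem_inter.1 hB
  exact ⟨B, ((mem_filter_univ B).1 (mem_of_mem_insert_of_ne hBD hBS)).2,
    ((mem_filter_univ B).1 hBB).2⟩

/-- Ties in a row are broken by a fixed order on the columns. -/
theorem IsScarfOrder.exists_isDominating_coneFeasible (hc : IsScarfOrder c)
    (hL : ∀ z, 0 ≤ z → L z = 0 → z = 0) (hunit : ∀ y, L (Sum.elim y 0) = y)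
    (hb : ∀ i, 0 < b i) : ∃ B, IsDominating c B ∧ ConeFeasible L b B := by
  classical
  cases nonempty_fintype N
  cases nonempty_fintype E
  obtain hE | hE := isEmpty_or_nonempty E
  · refine ⟨univ.image Sum.inl, ?_, coneFeasible_image_inl hunit fun i => (hb i).le⟩
    rintro (i | e)
    · exact ⟨i, fun j _ => hc.inl_le i j⟩
    · exact isEmptyElim e
  let c' (i : N) (t : N ⊕ E) : α ×ₗ Fin (Fintype.card (N ⊕ E)) :=
    toLex (c i t, Fintype.equivFin (N ⊕ E) t)
  have hc' : IsScarfOrder c' :=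
    ⟨fun i t ht => Prod.Lex.toLex_lt_toLex.2 (.inl (hc.inl_lt i t ht)),
      fun i j e hj => Prod.Lex.toLex_lt_toLex.2 (.inl (hc.inr_lt_inl i j e hj))⟩
  have hinj (i : N) : Function.Injective (c' i) := fun s t hst =>
    (Fintype.equivFin (N ⊕ E)).injective (congrArg (fun p => (ofLex p).2) hst)
  have hnhds : {b' : N → ℝ | 0 ≤ b'} ∈ nhds b := by
    filter_upwards [(isOpen_set_pi (Set.toFinite Set.univ) fun _ _ => isOpen_Ioi).mem_nhds
      (show b ∈ Set.univ.pi fun _ => Set.Ioi 0 from fun i _ => hb i)] with b' hb'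
    exact fun i => (hb' i trivial).le
  obtain ⟨b', hb'₀, hb', hfeas⟩ := exists_isGeneric_coneFeasible_imp hL hnhds
  obtain ⟨B, hB, hBfeas⟩ :=
    hc'.exists_isDominating_coneFeasible_of_isGeneric hinj hL hunit hb'₀ hb'
  refine ⟨B, fun t => ?_, hfeas B hBfeas⟩
  obtain ⟨i, hi⟩ := hB t
  exact ⟨i, fun j hj => Prod.Lex.monotone_fst _ _ (hi j hj)⟩

end ScarfLemma

section FractionalStability

variable {N E : Type*} [DecidableEq N]

/-- The preferences of a player `i` used for stability: being alone is worst, then come the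
coalitions `S e` containing `i` ranked by `w e i`, then the coalitions without `i`, all of them
valued `M`, and finally the other singletons. -/
noncomputable def scarfPreference (S : E → Finset N) (w : E → N → ℝ) (M : ℝ) (i : N) :
    N ⊕ E → EReal :=
  Sum.elim (fun j => if j = i then ⊥ else ⊤) fun e => ((if i ∈ S e then w e i else M : ℝ) : EReal)

theorem isScarfOrder_scarfPreference (S : E → Finset N) (w : E → N → ℝ) (M : ℝ) :
    IsScarfOrder (scarfPreference S w M) where
  inl_lt := by
    rintro i (j | e) ht
    · have hji : j ≠ i := fun h => ht (congrArg Sum.inl h)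
      simp [scarfPreference, hji]
    · simp only [scarfPreference, Sum.elim_inl, Sum.elim_inr, if_pos]
      exact EReal.bot_lt_coe _
  inr_lt_inl i j e hj := by
    simp only [scarfPreference, Sum.elim_inl, Sum.elim_inr, if_neg hj]
    exact EReal.coe_lt_top _

variable {S : E → Finset N} {w : E → N → ℝ} {M : ℝ} {i : N} {e : E}

theorem ne_inl_of_scarfPreference_inr_le {t : N ⊕ E}
    (h : scarfPreference S w M i (Sum.inr e) ≤ scarfPreference S w M i t) : t ≠ Sum.inl i := by
  rintro rfl
  exact ((isScarfOrder_scarfPreference S w M).inl_lt i _ Sum.inr_ne_inl).not_ge h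

theorem mem_of_scarfPreference_inr_le (hM : ∀ e i, w e i < M) {e' : E} (hi : i ∈ S e')
    (h : scarfPreference S w M i (Sum.inr e) ≤ scarfPreference S w M i (Sum.inr e')) :
    i ∈ S e := by
  by_contra hie
  simp only [scarfPreference, Sum.elim_inr, if_pos hi, if_neg hie, EReal.coe_le_coe_iff] at h
  exact (hM e' i).not_ge h

theorem le_of_scarfPreference_inr_le {e' : E} (hi : i ∈ S e) (hi' : i ∈ S e')
    (h : scarfPreference S w M i (Sum.inr e) ≤ scarfPreference S w M i (Sum.inr e')) :
    w e i ≤ w e' i := by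
  simpa only [scarfPreference, Sum.elim_inr, if_pos hi, if_pos hi', EReal.coe_le_coe_iff] using h

variable [Fintype N] [Fintype E]

/-- The map sending the weights of the singletons and of the coalitions `S e` to the total weight
received by each player. -/
def coverage (S : E → Finset N) : (N ⊕ E → ℝ) →ₗ[ℝ] N → ℝ :=
  LinearMap.pi fun i => ∑ t with i ∈ Sum.elim singleton S t, LinearMap.proj t

theorem coverage_apply (S : E → Finset N) (x : N ⊕ E → ℝ) (i : N) :
    coverage S x i = ∑ t with i ∈ Sum.elim singleton S t, x t := by
  simp [coverage]

theorem coverage_elim_zero (S : E → Finset N) (y : N → ℝ) : coverage S (Sum.elim y 0) = y := by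
  ext i
  rw [coverage_apply, sum_filter, Fintype.sum_sum_type]
  have hinr : ∑ e, (if i ∈ Sum.elim singleton S (Sum.inr e) then Sum.elim y 0 (Sum.inr e) else 0)
      = (0 : ℝ) := sum_eq_zero fun e _ => ite_self _
  rw [hinr, add_zero]
  simp

theorem eq_zero_of_coverage_eq_zero (hS : ∀ e, (S e).Nonempty) {x : N ⊕ E → ℝ} (hx : 0 ≤ x)
    (h : coverage S x = 0) : x = 0 := by
  ext t
  obtain ⟨i, hi⟩ : (Sum.elim singleton S t).Nonempty := by
    cases t with
    | inl j => exact singleton_nonempty j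
    | inr e => exact hS e
  have hsum := congrFun h i
  rw [coverage_apply] at hsum
  exact (sum_eq_zero_iff_of_nonneg fun t _ => hx t).1 hsum t ((mem_filter_univ t).2 hi)

theorem exists_fractional_stable (hS : ∀ e, (S e).Nonempty) (w : E → N → ℝ) :
    ∃ x : N ⊕ E → ℝ, 0 ≤ x ∧ (∀ i, ∑ t with i ∈ Sum.elim singleton S t, x t = 1) ∧
      ∀ e, ∃ i ∈ S e, x (Sum.inl i) = 0 ∧
        ∀ e', x (Sum.inr e') ≠ 0 → i ∈ S e' → w e i ≤ w e' i := by
  obtain ⟨M, hM⟩ : ∃ M, ∀ e i, w e i < M := by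
    obtain ⟨M, hM⟩ := (Set.finite_range fun p : E × N => w p.1 p.2).bddAbove
    exact ⟨M + 1, fun e i => lt_add_of_le_of_pos (hM ⟨(e, i), rfl⟩) one_pos⟩
  obtain ⟨B, hB, x, hx₀, hxB, hx⟩ :=
    (isScarfOrder_scarfPreference S w M).exists_isDominating_coneFeasible
      (fun _ => eq_zero_of_coverage_eq_zero hS) (coverage_elim_zero S) fun _ => one_pos
  have hcover (i : N) : ∑ t with i ∈ Sum.elim singleton S t, x t = 1 := by
    rw [← coverage_apply, hx]
  refine ⟨x, hx₀, hcover, fun e => ?_⟩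
  obtain ⟨i, hi⟩ := hB (Sum.inr e)
  replace hi {t : N ⊕ E} (ht : x t ≠ 0) := hi t (not_imp_comm.1 (hxB t) ht)
  obtain ⟨t, ht, hxt⟩ := exists_ne_zero_of_sum_ne_zero (by rw [hcover i]; exact one_ne_zero)
  have hie : i ∈ S e := by
    obtain j | e' := t
    · obtain rfl : i = j := by simpa using ht
      exact absurd rfl (ne_inl_of_scarfPreference_inr_le (hi hxt))
    · exact mem_of_scarfPreference_inr_le hM (mem_filter.1 ht).2 (hi hxt)
  refine ⟨i, hie, ?_, fun e' he' hie' => le_of_scarfPreference_inr_le hie hie' (hi he')⟩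
  by_contra h
  exact ne_inl_of_scarfPreference_inr_le (hi h) rfl

end FractionalStability

section NTUGame

variable {N : Type*} [Fintype N] {V : Finset N → Set (N → ℝ)}

/-- A game in which `V S` is the set of payoffs that the coalition `S` can guarantee to its members
is balanced if a payoff is feasible for all players as soon as it is feasible for every coalition of
some balanced collection. -/
def IsBalancedGame [DecidableEq N] (V : Finset N → Set (N → ℝ)) : Prop :=
  ∀ (𝒮 : Finset (Finset N)) (lam : Finset N → ℝ),
    (∀ S ∈ 𝒮, S.Nonempty) → (∀ S ∈ 𝒮, 0 ≤ lam S) →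
    (∀ i : N, ∑ S ∈ 𝒮.filter (fun S => i ∈ S), lam S = 1) → (⋂ S ∈ 𝒮, V S) ⊆ V univ

/-- Comprehensiveness (free disposal of utility): a payoff is feasible for `S` if it is dominated on
`S` by a feasible one, whatever its coordinates outside `S` are. -/
def IsComprehensive (V : Finset N → Set (N → ℝ)) : Prop :=
  ∀ ⦃S u w⦄, u ∈ V S → (∀ i ∈ S, w i ≤ u i) → w ∈ V S

/-- The core of a game: the payoffs that are feasible for all players and that no coalition can
improve upon for all its members. -/
def gameCore (V : Finset N → Set (N → ℝ)) : Set (N → ℝ) :=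
  V univ \ ⋃ (S : Finset N) (_ : S.Nonempty), interior (V S)

theorem mem_gameCore_of_forall_exists_le {u : N → ℝ} (hu : u ∈ V univ)
    (h : ∀ S : Finset N, S.Nonempty → ∀ y ∈ V S, ∃ i ∈ S, y i ≤ u i) : u ∈ gameCore V := by
  refine ⟨hu, fun hmem => ?_⟩
  simp only [Set.mem_iUnion] at hmem
  obtain ⟨S, hS, hint⟩ := hmem
  have hlim : Filter.Tendsto (fun ε : ℝ => u + fun _ => ε) (nhdsWithin 0 (Set.Ioi 0)) (nhds u) :=
    tendsto_nhdsWithin_of_tendsto_nhds (Continuous.tendsto' (by fun_prop) _ _ (add_zero u))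
  obtain ⟨ε, hεV, hε⟩ :=
    ((hlim.eventually_mem (mem_interior_iff_mem_nhds.1 hint)).and self_mem_nhdsWithin).exists
  obtain ⟨i, -, hi⟩ := h S hS _ hεV
  exact (lt_add_of_pos_right (u i) hε).not_ge hi

variable [DecidableEq N]

theorem IsBalancedGame.mem_of_forall_mem {T : Type*} [Fintype T] (hV : IsBalancedGame V)
    {S : T → Finset N} (hS : ∀ t, (S t).Nonempty) {x : T → ℝ} (hx : 0 ≤ x)
    (hsum : ∀ i, ∑ t with i ∈ S t, x t = 1) {u : N → ℝ} (hu : ∀ t, x t ≠ 0 → u ∈ V (S t)) :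
    u ∈ V univ := by
  let support : Finset T := {t | x t ≠ 0}
  have hsupport {t : T} : t ∈ support ↔ x t ≠ 0 := mem_filter_univ t
  have hmem : ∀ S' ∈ support.image S, u ∈ V S' :=
    forall_mem_image.2 fun t ht => hu t (hsupport.1 ht)
  refine hV (support.image S) (fun S' => ∑ t with S t = S', x t)
    (forall_mem_image.2 fun t _ => hS t) (fun _ _ => sum_nonneg fun t _ => hx t) (fun i => ?_)
    (Set.mem_iInter₂.2 hmem)
  rw [sum_fiberwise_eq_sum_filter, ← hsum i]
  simp only [mem_filter]
  refine sum_subset (monotone_filter_right univ fun t _ ht => ht.2) fun t ht ht' => ?_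
  simp only [mem_filter, mem_univ, true_and] at ht ht'
  by_contra hxt
  exact ht' ⟨mem_image_of_mem S (hsupport.2 hxt), ht⟩

theorem IsBalancedGame.exists_unblocked_of_lt {E : Type*} [Finite E] (hV : IsBalancedGame V)
    (hcomp : IsComprehensive V) {d : N → ℝ} (hd : ∀ i, d ∈ V {i}) {S : E → Finset N}
    (hS : ∀ e, (S e).Nonempty) {y : E → N → ℝ} (hy : ∀ e, y e ∈ V (S e))
    (hdy : ∀ e, ∀ i ∈ S e, d i < y e i) :
    ∃ u ∈ V univ, d ≤ u ∧ ∀ e, ∃ i ∈ S e, y e i ≤ u i := by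
  cases nonempty_fintype E
  obtain ⟨x, hx₀, hx, hstable⟩ := exists_fractional_stable hS y
  let p : N ⊕ E → N → ℝ := Sum.elim (fun _ => d) y
  have hmin (i : N) : ∃ t, (i ∈ Sum.elim singleton S t ∧ x t ≠ 0) ∧
      ∀ t', i ∈ Sum.elim singleton S t' ∧ x t' ≠ 0 → p t i ≤ p t' i := by
    obtain ⟨t, ht, hxt⟩ := exists_ne_zero_of_sum_ne_zero (by rw [hx i]; exact one_ne_zero)
    exact Set.exists_min_image {t | i ∈ Sum.elim singleton S t ∧ x t ≠ 0} (p · i)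
      (Set.toFinite _) ⟨t, (mem_filter.1 ht).2, hxt⟩
  choose worst hworst hle using hmin
  refine ⟨fun i => p (worst i) i, ?_, fun i => ?_, fun e => ?_⟩
  · refine hV.mem_of_forall_mem (S := Sum.elim singleton S) ?_ hx₀ hx fun t ht =>
      hcomp (u := p t) ?_ fun i hi => hle i t ⟨hi, ht⟩
    · exact Sum.rec (fun i => singleton_nonempty i) hS
    · exact Sum.rec hd hy t
  · have hi := (hworst i).1
    dsimp only
    cases h : worst i with
    | inl j => exact le_rfl
    | inr e => exact (hdy e i (by rwa [h] at hi)).le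
  · obtain ⟨i, hi, hxi, hbest⟩ := hstable e
    refine ⟨i, hi, ?_⟩
    have hi' := hworst i
    dsimp only
    cases h : worst i with
    | inl j =>
      rw [h] at hi'
      obtain rfl : i = j := by simpa using hi'.1
      exact absurd hxi hi'.2
    | inr e' =>
      rw [h] at hi'
      exact hbest e' hi'.2 hi'.1

theorem IsBalancedGame.exists_unblocked {E : Type*} [Finite E] (hV : IsBalancedGame V)
    (hcomp : IsComprehensive V) {d : N → ℝ} (hd : ∀ i, d ∈ V {i}) {S : E → Finset N}
    (hS : ∀ e, (S e).Nonempty) {y : E → N → ℝ} (hy : ∀ e, y e ∈ V (S e)) :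
    ∃ u ∈ V univ, d ≤ u ∧ ∀ e, ∃ i ∈ S e, y e i ≤ u i := by
  obtain ⟨u, hu, hdu, hunblocked⟩ := hV.exists_unblocked_of_lt hcomp hd
    (E := {e // ∀ i ∈ S e, d i < y e i}) (fun e => hS e) (fun e => hy e) fun e => e.2
  refine ⟨u, hu, hdu, fun e => ?_⟩
  by_cases he : ∀ i ∈ S e, d i < y e i
  · exact hunblocked ⟨e, he⟩
  · push Not at he
    obtain ⟨i, hi, hle⟩ := he
    exact ⟨i, hi, hle.trans (hdu i)⟩

theorem IsBalancedGame.gameCore_nonempty (hV : IsBalancedGame V) (hcomp : IsComprehensive V)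
    (hne : ∀ i, (V {i}).Nonempty) (hclosed : IsClosed (V univ))
    (hbdd : ∀ d, BddAbove (V univ ∩ Set.Ici d)) : (gameCore V).Nonempty := by
  choose f hf using hne
  let d : N → ℝ := fun i => f i i
  have hd (i : N) : d ∈ V {i} := hcomp (hf i) fun j hj => by rw [mem_singleton.1 hj]
  obtain ⟨B, hB⟩ := hbdd d
  have hcompact : IsCompact (V univ ∩ Set.Ici d) :=
    isCompact_Icc.of_isClosed_subset (hclosed.inter isClosed_Ici) fun u hu => ⟨hu.2, hB hu⟩
  let Objection := {p : Finset N × (N → ℝ) // p.1.Nonempty ∧ p.2 ∈ V p.1}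
  let resists (p : Objection) : Set (N → ℝ) := ⋃ i ∈ p.1.1, {u | p.1.2 i ≤ u i}
  obtain ⟨u, hu, hresists⟩ := hcompact.inter_iInter_nonempty resists
    (fun p => isClosed_biUnion_finset fun i _ =>
      isClosed_le continuous_const (continuous_apply i)) fun P => by
      obtain ⟨u, hu, hdu, hunblocked⟩ := hV.exists_unblocked hcomp hd (E := P)
        (S := fun p => p.1.1.1) (fun p => p.1.2.1) (y := fun p => p.1.1.2) fun p => p.1.2.2
      exact ⟨u, ⟨hu, hdu⟩, Set.mem_iInter₂.2 fun p hp => by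
        simpa only [resists, Set.mem_iUnion, exists_prop, Set.mem_ofPred_eq]
          using hunblocked ⟨p, hp⟩⟩
  refine ⟨u, mem_gameCore_of_forall_exists_le hu.1 fun S hS y hy => ?_⟩
  simpa only [resists, Set.mem_iUnion, exists_prop, Set.mem_ofPred_eq]
    using Set.mem_iInter.1 hresists ⟨(S, y), hS, hy⟩

end NTUGame

section LinearProductionGame

variable {K J N : Type*} [Fintype J] {A : K → J → ℝ} {b : N → K → ℝ} {v : N → J → ℝ}
  {S : Finset N}

theorem designSpace_eq_inter (A : K → J → ℝ) (b : N → K → ℝ) (S : Finset N) :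
    designSpace A b S = Set.Ici 0 ∩ ⋂ k, {x | A k ⬝ᵥ x ≤ ∑ i ∈ S, b i k} := by
  ext x
  simp [designSpace, dotProduct, Pi.le_def]

theorem isClosed_designSpace (A : K → J → ℝ) (b : N → K → ℝ) (S : Finset N) :
    IsClosed (designSpace A b S) := by
  rw [designSpace_eq_inter]
  exact isClosed_Ici.inter (isClosed_iInter fun k =>
    isClosed_le (Continuous.dotProduct continuous_const continuous_id) continuous_const)

theorem convex_designSpace (A : K → J → ℝ) (b : N → K → ℝ) (S : Finset N) :
    Convex ℝ (designSpace A b S) := by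
  rw [designSpace_eq_inter]
  exact (convex_Ici 0).inter (convex_iInter fun k =>
    convex_halfSpace_le ⟨dotProduct_add (A k), fun r x => dotProduct_smul r (A k) x⟩ _)

theorem forall_ray_mem_designSpace_iff {p z : J → ℝ} (hp : p ∈ designSpace A b S) :
    (∀ r : ℝ, 0 ≤ r → r • z + p ∈ designSpace A b S) ↔ 0 ≤ z ∧ ∀ k, A k ⬝ᵥ z ≤ 0 := by
  have hconstraint (k : K) (r : ℝ) : A k ⬝ᵥ (r • z + p) ≤ ∑ i ∈ S, b i k ↔
      0 ≤ r * -(A k ⬝ᵥ z) + (∑ i ∈ S, b i k - A k ⬝ᵥ p) := by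
    rw [dotProduct_add, dotProduct_smul, smul_eq_mul, ← sub_nonneg]
    ring_nf
  have hcoord (j : J) := nonneg_iff_forall_nonneg_mul_add (x := z j) (hp.1 j)
  have hslack (k : K) := nonneg_iff_forall_nonneg_mul_add (x := -(A k ⬝ᵥ z)) (sub_nonneg.2 (hp.2 k))
  refine ⟨fun h => ⟨fun j => (hcoord j).2 fun r hr => (h r hr).1 j, fun k => ?_⟩,
    fun h r hr => ⟨fun j => ?_, fun k => ?_⟩⟩
  · exact neg_nonneg.1 ((hslack k).2 fun r hr => (hconstraint k r).1 ((h r hr).2 k))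
  · exact (hcoord j).1 (h.1 j) r hr
  · exact (hconstraint k r).2 ((hslack k).1 (neg_nonneg.2 (h.2 k)) r hr)

theorem isBounded_designSpace_iff (hne : (designSpace A b S).Nonempty) :
    Bornology.IsBounded (designSpace A b S) ↔ ∀ z, 0 ≤ z → (∀ k, A k ⬝ᵥ z ≤ 0) → z = 0 := by
  obtain ⟨p, hp⟩ := hne
  simp only [isBounded_iff_forall_ray_eq_zero (convex_designSpace A b S)
    (isClosed_designSpace A b S) hp, forall_ray_mem_designSpace_iff hp, and_imp]

theorem nonempty_utilitySpace (hne : (designSpace A b S).Nonempty) :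
    (utilitySpace A b v S).Nonempty := by
  obtain ⟨x, hx⟩ := hne
  exact ⟨fun i => ∑ j, v i j * x j, x, hx, fun _ _ => le_rfl⟩

theorem isComprehensive_utilitySpace (A : K → J → ℝ) (b : N → K → ℝ) (v : N → J → ℝ) :
    IsComprehensive (utilitySpace A b v) :=
  fun _ _ _ ⟨x, hx, hux⟩ hw => ⟨x, hx, fun i hi => (hw i hi).trans (hux i hi)⟩

variable [Fintype N]

theorem utilitySpace_univ_eq_lowerClosure (A : K → J → ℝ) (b : N → K → ℝ) (v : N → J → ℝ) :
    utilitySpace A b v univ = lowerClosure ((fun x i => v i ⬝ᵥ x) '' designSpace A b univ) := by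
  ext u
  simp [utilitySpace, dotProduct, Pi.le_def]

theorem isClosed_and_bddAbove_utilitySpace_univ (h : IsCompact (designSpace A b univ)) :
    IsClosed (utilitySpace A b v univ) ∧ BddAbove (utilitySpace A b v univ) := by
  have himage : IsCompact ((fun x i => v i ⬝ᵥ x) '' designSpace A b univ) :=
    h.image (continuous_pi fun i => Continuous.dotProduct continuous_const continuous_id)
  have hbdd := himage.isBounded.bddAbove
  rw [utilitySpace_univ_eq_lowerClosure]
  exact ⟨himage.isClosed.lowerClosure_pi hbdd, hbdd.lowerClosure⟩

variable {T : Type*} {s : Finset T} {C : T → Finset N} {lam : T → ℝ}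
  {x : T → J → ℝ}

theorem sum_mul_sum_eq_sum_of_balanced [DecidableEq N]
    (hsum : ∀ i, ∑ t ∈ s with i ∈ C t, lam t = 1) (f : N → ℝ) :
    ∑ t ∈ s, lam t * ∑ i ∈ C t, f i = ∑ i, f i := by
  simp_rw [mul_sum]
  rw [sum_comm' (t' := univ) (s' := fun i => {t ∈ s | i ∈ C t}) (by simp)]
  simp_rw [← sum_mul, hsum, one_mul]

theorem sum_smul_mem_designSpace_univ [DecidableEq N] (hlam : ∀ t ∈ s, 0 ≤ lam t)
    (hsum : ∀ i, ∑ t ∈ s with i ∈ C t, lam t = 1) (hx : ∀ t ∈ s, x t ∈ designSpace A b (C t)) :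
    ∑ t ∈ s, lam t • x t ∈ designSpace A b univ := by
  refine ⟨fun j => ?_, fun k => ?_⟩
  · rw [Finset.sum_apply]
    exact sum_nonneg fun t ht => mul_nonneg (hlam t ht) ((hx t ht).1 j)
  · calc A k ⬝ᵥ ∑ t ∈ s, lam t • x t
        = ∑ t ∈ s, lam t * (A k ⬝ᵥ x t) := by
          simp only [dotProduct_sum, dotProduct_smul, smul_eq_mul]
      _ ≤ ∑ t ∈ s, lam t * ∑ i ∈ C t, b i k :=
          sum_le_sum fun t ht => mul_le_mul_of_nonneg_left ((hx t ht).2 k) (hlam t ht)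
      _ = ∑ i, b i k := sum_mul_sum_eq_sum_of_balanced hsum (b · k)

theorem nonempty_designSpace_univ (hne : ∀ i, (designSpace A b {i}).Nonempty) :
    (designSpace A b univ).Nonempty := by
  classical
  choose x hx using hne
  exact ⟨_, sum_smul_mem_designSpace_univ (s := univ) (lam := 1) (fun _ _ => zero_le_one)
    (fun i => by simp [filter_eq]) fun i _ => hx i⟩

theorem isCompact_designSpace_univ (hne : ∀ i, (designSpace A b {i}).Nonempty)
    (hbd : ∃ i, Bornology.IsBounded (designSpace A b {i})) : IsCompact (designSpace A b univ) := by
  obtain ⟨i, hi⟩ := hbd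
  exact Metric.isCompact_of_isClosed_isBounded (isClosed_designSpace A b univ)
    ((isBounded_designSpace_iff (nonempty_designSpace_univ hne)).2
      ((isBounded_designSpace_iff (hne i)).1 hi))

theorem isBalancedGame_utilitySpace [DecidableEq N]
    (hv : ∀ S, ∀ i ∉ S, ∀ x ∈ designSpace A b S, 0 ≤ ∑ j, v i j * x j) :
    IsBalancedGame (utilitySpace A b v) := by
  intro 𝒮 lam _ hlam hsum u hu
  choose! x hx hux using Set.mem_iInter₂.1 hu
  refine ⟨∑ S ∈ 𝒮, lam S • x S, sum_smul_mem_designSpace_univ hlam hsum hx, fun i _ => ?_⟩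
  calc u i = ∑ S ∈ 𝒮 with i ∈ S, lam S * u i := by rw [← sum_mul, hsum, one_mul]
    _ ≤ ∑ S ∈ 𝒮 with i ∈ S, lam S * (v i ⬝ᵥ x S) := sum_le_sum fun S hS => by
        obtain ⟨hS𝒮, hiS⟩ := mem_filter.1 hS
        exact mul_le_mul_of_nonneg_left (hux S hS𝒮 i hiS) (hlam S hS𝒮)
    _ ≤ ∑ S ∈ 𝒮, lam S * (v i ⬝ᵥ x S) :=
        sum_le_sum_of_subset_of_nonneg (filter_subset _ 𝒮) fun S hS hiS => mul_nonneg (hlam S hS)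
          (hv S i (fun hi => hiS (mem_filter.2 ⟨hS, hi⟩)) (x S) (hx S hS))
    _ = v i ⬝ᵥ ∑ S ∈ 𝒮, lam S • x S := by
        simp only [dotProduct_sum, dotProduct_smul, smul_eq_mul]

end LinearProductionGame

theorem ntulp_nonneg_valuations_balanced_core_nonempty_general {K J N : Type*} [Fintype J]
    [Fintype N] [DecidableEq N] (A : K → J → ℝ) (b : N → K → ℝ) (v : N → J → ℝ)
    (hne : ∀ i, (designSpace A b {i}).Nonempty)
    (hbd : ∃ i, Bornology.IsBounded (designSpace A b {i}))
    (hv : ∀ S, ∀ i ∉ S, ∀ x ∈ designSpace A b S, 0 ≤ ∑ j, v i j * x j) :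
    IsBalancedGame (utilitySpace A b v) ∧ (core A b v).Nonempty := by
  have hbalanced := isBalancedGame_utilitySpace hv
  obtain ⟨hclosed, hbdd⟩ :=
    isClosed_and_bddAbove_utilitySpace_univ (v := v) (isCompact_designSpace_univ hne hbd)
  exact ⟨hbalanced, hbalanced.gameCore_nonempty (isComprehensive_utilitySpace A b v)
    (fun i => nonempty_utilitySpace (hne i)) hclosed fun _ => hbdd.mono Set.inter_subset_left⟩

/-- If every `X({i})` is nonempty and bounded and all valuations are componentwise
nonnegative, then the NTU LP game is balanced and its core is nonempty. -/
theorem ntulp_nonneg_valuations_balanced_core_nonempty {K J N : Type*}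
    [Fintype J] [Fintype K] [Fintype N] [Nonempty N] [DecidableEq N]
    (A : K → J → ℝ) (b : N → K → ℝ) (v : N → J → ℝ)
    (hne : ∀ i : N, (designSpace A b {i}).Nonempty)
    (hbd : ∀ i : N, Bornology.IsBounded (designSpace A b {i}))
    (hv : ∀ i : N, ∀ j : J, 0 ≤ v i j) :
    (∀ (𝒮 : Finset (Finset N)) (lam : Finset N → ℝ),
      (∀ S ∈ 𝒮, S.Nonempty) → (∀ S ∈ 𝒮, 0 ≤ lam S) →
      (∀ i : N, ∑ S ∈ 𝒮.filter (fun S => i ∈ S), lam S = 1) →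
      (⋂ S ∈ 𝒮, utilitySpace A b v S) ⊆ utilitySpace A b v Finset.univ) ∧
    (core A b v).Nonempty :=
  ntulp_nonneg_valuations_balanced_core_nonempty_general A b v hne ⟨_, hbd (Classical.arbitrary N)⟩
    fun _ i _ _ hx => sum_nonneg fun j _ => mul_nonneg (hv i j) (hx.1 j)
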